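/- Let q = 2v with v odd, N' a positive integer, and c ∈ ℤ⁴. Then S_q(c) = Σ*_{a mod q} Σ_{b mod q} e((a(F(b) − 4N') + b·c)/q) equals 4 δ q² S(2N', F(c)/2; q), where δ = 1 if all coordinates c_i are odd and δ = 0 otherwise; in particular S_q(c) = 0 unless all c_i are odd, in which case 4 divides F(c). -/

import Mathlib

open Finset

/-- `e(x) = exp(2πi x)`. -/
noncomputable def e (x : ℝ) : ℂ := Complex.exp (2 * Real.pi * Complex.I * x)

/-- The Kloosterman sum `S(m,n;q) = Σ_{x mod q, (x,q)=1} e((m x + n x̄)/q)`. -/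
noncomputable def kloosterman (m n : ℤ) (q : ℕ) : ℂ :=
  ∑ x ∈ (Finset.range q).filter (fun x => Nat.Coprime x q),
    e (((m * (x : ℤ) + n * ((((x : ZMod q)⁻¹).val : ℤ)) : ℤ) : ℝ) / q)

/-- The quadratic form `F(x) = x₁² + x₂² + x₃² + x₄²`. -/
def F (c : Fin 4 → ℤ) : ℤ := ∑ i, (c i) ^ 2

/-- The exponential sum `S_q(c) = Σ*_{a mod q} Σ_{b mod q, b ∈ (ℤ/q)⁴}
    e((a(F(b) - N) + b·c)/q)`. -/
noncomputable def Sq (q : ℕ) (N : ℤ) (c : Fin 4 → ℤ) : ℂ :=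
  ∑ a ∈ (Finset.range q).filter (fun a => Nat.Coprime a q),
    ∑ b : Fin 4 → Fin q,
      e ((((a : ℤ) * (F (fun i => ((b i : ℕ) : ℤ)) - N) +
            ∑ i, ((b i : ℕ) : ℤ) * c i : ℤ) : ℝ) / q)

/-!
For odd `v` the ring `ℤ/2v` is `𝔽₂ × ℤ/v`, and the class `w` of `v` is the idempotent of the first
factor. For a unit `u`, the translation `b ↦ b + w` multiplies the summand of
`∑ b, ψ (u b² + c b)` by `ψ (w + w c)`, so this sum vanishes when `c` is even. When `c` is odd,
write `c = w + 2 u d`. Since `w b² = w b`, the term `w b` can be moved into the quadratic part, and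
`u b² + c b = (u + w) (b + d)² - (u + w) d²`. The fourth power of `G a = ∑ b, ψ (a b²)` needs no
quadratic symbols: `-1` is a sum of two squares in `ℤ/2v`, so `G (-a) ^ 2 = G a ^ 2` and
`G a ^ 4 = (G a * G (-a)) ^ 2`, which at `a = u + w` equals `(2 q) ^ 2` with `q = 2v`. The
remaining sum over `u` becomes the Kloosterman sum after the substitution `t = -(2 - w) u`.
-/

theorem addChar_map_sum {A M ι : Type*} [AddCommMonoid A] [CommMonoid M] (ψ : AddChar A M)
    (s : Finset ι) (f : ι → A) : ψ (∑ i ∈ s, f i) = ∏ i ∈ s, ψ (f i) :=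
  map_prod ψ.toMonoidHom (fun i => Multiplicative.ofAdd (f i)) s

section Ring

variable {R K : Type*} [CommRing R] [CommRing K]

/-- The idempotent `(1, 0)` of a decomposition `R ≅ 𝔽₂ × R'` with `2` invertible in `R'`. The
conditions are intrinsic, so that Gauss sums over `ℤ/2v`, `v` odd, can be treated without splitting
the ring; idempotence follows from them (`mul_self`). -/
structure IsDyadicIdempotent (w : R) : Prop where
  ne_zero : w ≠ 0
  mul_eq_zero_or_eq_self : ∀ x, w * x = 0 ∨ w * x = w
  exists_two_mul_eq : ∃ k, 2 * k = 1 + w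

namespace IsDyadicIdempotent

variable {w : R} (hw : IsDyadicIdempotent w)
include hw

theorem two_mul_eq_zero : 2 * w = 0 := by
  rcases hw.mul_eq_zero_or_eq_self 2 with h | h
  · linear_combination h
  · exact absurd (by linear_combination h) hw.ne_zero

theorem mul_self : w * w = w := by
  obtain ⟨k, hk⟩ := hw.exists_two_mul_eq
  linear_combination (k - 1) * hw.two_mul_eq_zero - w * hk

theorem mul_unit (u : Rˣ) : w * u = w :=
  (hw.mul_eq_zero_or_eq_self u).resolve_left fun h => hw.ne_zero ((Units.mul_left_eq_zero u).mp h)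

theorem mul_sq (x : R) : w * x ^ 2 = w * x := by
  rcases hw.mul_eq_zero_or_eq_self x with h | h
  · linear_combination (x - 1) * h
  · linear_combination x * h

theorem two_mul_eq_of_four_mul_eq {x y : R} (h : 4 * x = 4 * y) : 2 * x = 2 * y := by
  obtain ⟨k, hk⟩ := hw.exists_two_mul_eq
  linear_combination k * h - 2 * (x - y) * hk - (x - y) * hw.two_mul_eq_zero

theorem two_mul_eq_zero_iff {x : R} : 2 * x = 0 ↔ x = 0 ∨ x = w := by
  obtain ⟨k, hk⟩ := hw.exists_two_mul_eq
  constructor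
  · intro h
    refine (hw.mul_eq_zero_or_eq_self x).imp (fun hx => ?_) fun hx => ?_
    · linear_combination k * h - x * hk - hx
    · linear_combination k * h - x * hk - hx - hw.two_mul_eq_zero
  · rintro (rfl | rfl)
    · exact mul_zero 2
    · exact hw.two_mul_eq_zero

theorem exists_eq_add_two_mul {c : R} (hc : w * c = w) (u : Rˣ) :
    ∃ d, c = w + 2 * (u * d) := by
  obtain ⟨k, hk⟩ := hw.exists_two_mul_eq
  refine ⟨↑u⁻¹ * k * (c - w), ?_⟩
  linear_combination -2 * k * (c - w) * u.mul_inv - (c - w) * hk - hc + hw.mul_self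

theorem isUnit_two_sub : IsUnit (2 - w) := by
  obtain ⟨k, hk⟩ := hw.exists_two_mul_eq
  refine IsUnit.of_mul_eq_one (k * (1 + w) + w) ?_
  linear_combination (1 + w) * hk + (2 - k) * hw.two_mul_eq_zero - k * hw.mul_self

end IsDyadicIdempotent

section QuadGaussSum

variable [Fintype R]

/-- The quadratic Gauss sum `∑ b, ψ (a b² + c b)` of an additive character `ψ`. -/
def quadGaussSum (ψ : AddChar R K) (a c : R) : K :=
  ∑ b : R, ψ (a * b ^ 2 + c * b)

theorem quadGaussSum_eq_zero [IsDomain K] {ψ : AddChar R K} {a c w : R} (hw : 2 * w = 0)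
    (hψ : ψ (a * w ^ 2 + c * w) ≠ 1) : quadGaussSum ψ a c = 0 := by
  have shift : ψ (a * w ^ 2 + c * w) * quadGaussSum ψ a c = quadGaussSum ψ a c := by
    conv_rhs => rw [quadGaussSum, ← Equiv.sum_comp (Equiv.addRight w)]
    rw [quadGaussSum, Finset.mul_sum]
    refine Finset.sum_congr rfl fun b _ => ?_
    rw [← AddChar.map_add_eq_mul, Equiv.coe_addRight]
    congr 1
    linear_combination -a * b * hw
  exact (mul_left_eq_self₀.mp shift).resolve_left hψ

theorem quadGaussSum_zero_sq (ψ : AddChar R K) (a : R) :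
    quadGaussSum ψ a 0 ^ 2 = ∑ p : R × R, ψ (a * (p.1 ^ 2 + p.2 ^ 2)) := by
  rw [quadGaussSum, sq, Fintype.sum_mul_sum, Fintype.sum_prod_type]
  refine Finset.sum_congr rfl fun x _ => Finset.sum_congr rfl fun y _ => ?_
  rw [← AddChar.map_add_eq_mul]
  congr 1
  ring

theorem quadGaussSum_neg_zero_sq {α β : R} (hαβ : α ^ 2 + β ^ 2 = -1) (ψ : AddChar R K) (a : R) :
    quadGaussSum ψ (-a) 0 ^ 2 = quadGaussSum ψ a 0 ^ 2 := by
  let similitude : R × R ≃ R × R :=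
    { toFun := fun p => (α * p.1 + β * p.2, -β * p.1 + α * p.2)
      invFun := fun p => (-(α * p.1 - β * p.2), -(β * p.1 + α * p.2))
      left_inv := fun p => by
        ext
        · linear_combination -p.1 * hαβ
        · linear_combination -p.2 * hαβ
      right_inv := fun p => by
        ext
        · linear_combination -p.1 * hαβ
        · linear_combination -p.2 * hαβ }
  rw [quadGaussSum_zero_sq, quadGaussSum_zero_sq]
  refine Fintype.sum_equiv similitude _ _ fun p => congrArg ψ ?_
  simp only [similitude, Equiv.coe_fn_mk]
  linear_combination -a * (p.1 ^ 2 + p.2 ^ 2) * hαβ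

variable [DecidableEq R] [IsDomain K] {ψ : AddChar R K}

theorem quadGaussSum_mul_quadGaussSum_neg (hψ : ψ.IsPrimitive) (a : R) :
    quadGaussSum ψ a 0 * quadGaussSum ψ (-a) 0 =
      Fintype.card R * ∑ d with 2 * a * d = 0, ψ (a * d ^ 2) := by
  have shift (y : R) : ∑ x, ψ (a * x ^ 2 + 0 * x) * ψ (-a * y ^ 2 + 0 * y) =
      ∑ d, ψ (a * d ^ 2) * ψ (y * (2 * a * d)) := by
    rw [← Equiv.sum_comp (Equiv.addRight y)]
    refine Finset.sum_congr rfl fun d _ => ?_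
    rw [← AddChar.map_add_eq_mul, ← AddChar.map_add_eq_mul, Equiv.coe_addRight]
    congr 1
    ring
  calc quadGaussSum ψ a 0 * quadGaussSum ψ (-a) 0
      = ∑ d, ψ (a * d ^ 2) * ∑ y, ψ (y * (2 * a * d)) := by
        rw [quadGaussSum, quadGaussSum, Fintype.sum_mul_sum, Finset.sum_comm]
        simp_rw [shift, Finset.mul_sum]
        exact Finset.sum_comm
    _ = ∑ d, if 2 * a * d = 0 then Fintype.card R * ψ (a * d ^ 2) else 0 := by
        refine Finset.sum_congr rfl fun d _ => ?_
        rw [AddChar.sum_mulShift _ hψ, Nat.cast_ite, Nat.cast_zero, mul_ite, mul_zero,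
          mul_comm (ψ _)]
    _ = Fintype.card R * ∑ d with 2 * a * d = 0, ψ (a * d ^ 2) := by
        rw [← Finset.sum_filter, Finset.mul_sum]

theorem quadGaussSum_zero_pow_four (hψ : ψ.IsPrimitive) {α β : R} (hαβ : α ^ 2 + β ^ 2 = -1)
    (a : R) :
    quadGaussSum ψ a 0 ^ 4 = (Fintype.card R * ∑ d with 2 * a * d = 0, ψ (a * d ^ 2)) ^ 2 := by
  rw [← quadGaussSum_mul_quadGaussSum_neg hψ, mul_pow, quadGaussSum_neg_zero_sq hαβ]
  ring

end QuadGaussSum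

namespace IsDyadicIdempotent

variable {w : R} (hw : IsDyadicIdempotent w)
include hw

theorem addChar_ne_one {ψ : AddChar R K} (hψ : ψ.IsPrimitive) : ψ w ≠ 1 := by
  obtain ⟨x, hx⟩ := AddChar.ne_one_iff.mp (hψ hw.ne_zero)
  rw [AddChar.mulShift_apply] at hx
  rcases hw.mul_eq_zero_or_eq_self x with h | h <;> rw [h] at hx
  · exact absurd ψ.map_zero_eq_one hx
  · exact hx

variable [Fintype R]

theorem quadGaussSum_eq_zero [IsDomain K] {ψ : AddChar R K} (hψ : ψ.IsPrimitive) (u : Rˣ) {c : R}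
    (hc : w * c = 0) : quadGaussSum ψ u c = 0 := by
  refine _root_.quadGaussSum_eq_zero hw.two_mul_eq_zero ?_
  convert hw.addChar_ne_one hψ using 2
  linear_combination u * hw.mul_self + hw.mul_unit u + hc

theorem quadGaussSum_add_two_mul (ψ : AddChar R K) (a d : R) :
    quadGaussSum ψ a (w + 2 * (a * d)) =
      ψ (-((a + w) * d ^ 2)) * quadGaussSum ψ (a + w) 0 := by
  rw [quadGaussSum, quadGaussSum,
    ← Equiv.sum_comp (Equiv.addRight d) (fun b => ψ ((a + w) * b ^ 2 + 0 * b)), Finset.mul_sum]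
  refine Finset.sum_congr rfl fun b _ => ?_
  rw [← AddChar.map_add_eq_mul, Equiv.coe_addRight]
  congr 1
  linear_combination -hw.mul_sq b - b * d * hw.two_mul_eq_zero

variable [IsDomain K] {ψ : AddChar R K} (hψ : ψ.IsPrimitive)
  {α β : R} (hαβ : α ^ 2 + β ^ 2 = -1)
include hψ hαβ

theorem quadGaussSum_unit_add_pow_four (u : Rˣ) :
    quadGaussSum ψ (u + w) 0 ^ 4 = 4 * (Fintype.card R : K) ^ 2 := by
  classical
  have annihilator : ({d | 2 * (u + w) * d = 0} : Finset R) = {0, w} := by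
    ext d
    have : 2 * (u + w) * d = u * (2 * d) := by linear_combination d * hw.two_mul_eq_zero
    simp [this, hw.two_mul_eq_zero_iff]
  have value_at_w : (u + w) * w ^ 2 = 0 := by
    linear_combination (u + w + 1) * hw.mul_self + hw.mul_unit u + hw.two_mul_eq_zero
  rw [quadGaussSum_zero_pow_four hψ hαβ, annihilator, Finset.sum_pair hw.ne_zero.symm, value_at_w,
    zero_pow two_ne_zero, mul_zero, ψ.map_zero_eq_one]
  ring

theorem prod_quadGaussSum {c : Fin 4 → R} (hc : ∀ i, w * c i = w) {m : R}
    (hm : ∑ i, c i ^ 2 = 4 * m) {s : Rˣ} (hs : (s : R) = 2 - w) (u : Rˣ) :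
    ∏ i, quadGaussSum ψ u (c i) =
      ψ (-(2 * m * ↑(s * u)⁻¹)) * (4 * (Fintype.card R : K) ^ 2) := by
  choose d hd using fun i => hw.exists_eq_add_two_mul (hc i) u
  have sum_sq : 4 * m = 4 * (u ^ 2 * ∑ i, d i ^ 2) := by
    rw [← hm, Fin.sum_univ_four, Fin.sum_univ_four, hd 0, hd 1, hd 2, hd 3]
    linear_combination (2 * w + 2 * u * (d 0 + d 1 + d 2 + d 3)) * hw.two_mul_eq_zero
  have exponent : (u + w) * ∑ i, d i ^ 2 = 2 * m * ↑(s * u)⁻¹ := by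
    rw [Units.eq_mul_inv_iff_mul_eq, Units.val_mul, hs, hw.two_mul_eq_of_four_mul_eq sum_sq]
    linear_combination -u * (∑ i, d i ^ 2) * (hw.mul_unit u + hw.mul_self)
  calc ∏ i, quadGaussSum ψ u (c i)
      = ∏ i, ψ (-((u + w) * d i ^ 2)) * quadGaussSum ψ (u + w) 0 :=
        Finset.prod_congr rfl fun i _ => by rw [hd i, hw.quadGaussSum_add_two_mul]
    _ = ψ (-((u + w) * ∑ i, d i ^ 2)) * quadGaussSum ψ (u + w) 0 ^ 4 := by
        rw [Finset.prod_mul_distrib, Finset.prod_const, Finset.card_univ, Fintype.card_fin,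
          Finset.mul_sum, ← Finset.sum_neg_distrib, addChar_map_sum]
    _ = _ := by rw [exponent, hw.quadGaussSum_unit_add_pow_four hψ hαβ]

theorem sum_units_prod_quadGaussSum [Fintype Rˣ] {c : Fin 4 → R} (hc : ∀ i, w * c i = w) {m : R}
    (hm : ∑ i, c i ^ 2 = 4 * m) (n : R) :
    ∑ u : Rˣ, ψ (-(u * ((2 - w) * n))) * ∏ i, quadGaussSum ψ u (c i) =
      4 * (Fintype.card R : K) ^ 2 * ∑ u : Rˣ, ψ (n * u + 2 * m * ↑u⁻¹) := by
  obtain ⟨s, hs⟩ := hw.isUnit_two_sub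
  rw [Finset.mul_sum]
  refine Fintype.sum_equiv (Equiv.mulLeft (-s)) _ _ fun u => ?_
  rw [hw.prod_quadGaussSum hψ hαβ hc hm hs, ← mul_assoc, ← AddChar.map_add_eq_mul, mul_comm]
  congr 2
  simp only [Equiv.coe_mulLeft, neg_mul, inv_neg, Units.val_neg, Units.val_mul, hs]
  ring

end IsDyadicIdempotent

end Ring

section ZMod

theorem natCast_mul_intCast_of_even (v : ℕ) {n : ℤ} (hn : Even n) :
    (v : ZMod (2 * v)) * n = 0 := by
  obtain ⟨m, rfl⟩ := hn
  have h : ((2 * v : ℕ) : ZMod (2 * v)) = 0 := ZMod.natCast_self _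
  push_cast at h ⊢
  linear_combination m * h

theorem natCast_mul_intCast_of_odd (v : ℕ) {n : ℤ} (hn : Odd n) :
    (v : ZMod (2 * v)) * n = v := by
  have h := natCast_mul_intCast_of_even v (hn.sub_odd odd_one)
  push_cast at h
  linear_combination h

theorem isDyadicIdempotent_natCast {v : ℕ} (hv : Odd v) :
    IsDyadicIdempotent (v : ZMod (2 * v)) where
  ne_zero h := by
    have := Nat.le_of_dvd hv.pos ((ZMod.natCast_eq_zero_iff _ _).mp h)
    have := hv.pos
    omega
  mul_eq_zero_or_eq_self x := by
    obtain ⟨n, rfl⟩ := ZMod.intCast_surjective x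
    exact n.even_or_odd.imp (natCast_mul_intCast_of_even v) (natCast_mul_intCast_of_odd v)
  exists_two_mul_eq := by
    obtain ⟨j, hj⟩ := hv.add_odd odd_one
    refine ⟨j, ?_⟩
    have := congrArg (Nat.cast : ℕ → ZMod (2 * v)) hj
    push_cast at this
    linear_combination -this

-- Dirichlet gives a prime `p ≡ 2v - 1 (mod 4v)`; being `1` mod `4` it is a sum of two squares.
theorem exists_sq_add_sq_eq_neg_one {v : ℕ} (hv : Odd v) :
    ∃ α β : ZMod (2 * v), α ^ 2 + β ^ 2 = -1 := by
  obtain ⟨j, rfl⟩ := hv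
  have coprime : IsCoprime (4 * j + 1 : ℤ) ((4 * (2 * j + 1) : ℕ) : ℤ) :=
    ⟨4 * j + 1, -(2 * j), by push_cast; ring⟩
  obtain ⟨p, -, hp, hpmod⟩ := Nat.forall_exists_prime_gt_and_zmodEq 0 (by omega) coprime
  have : Fact p.Prime := ⟨hp⟩
  obtain ⟨z, hz⟩ := hpmod.symm.dvd
  have hp4 : p % 4 ≠ 3 := by
    push_cast at hz
    have : (p : ℤ) = 4 * (j + (2 * j + 1) * z) + 1 := by linear_combination hz
    omega
  have hp_neg_one : (p : ZMod (2 * (2 * j + 1))) = -1 := by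
    have h0 : ((2 * (2 * j + 1) : ℕ) : ZMod (2 * (2 * j + 1))) = 0 := ZMod.natCast_self _
    have h := congrArg (Int.cast : ℤ → ZMod (2 * (2 * j + 1))) hz
    push_cast at h0 h
    linear_combination h + (1 + 2 * z) * h0
  obtain ⟨x, y, hxy⟩ := Nat.Prime.sq_add_sq hp4
  exact ⟨x, y, by rw [← hp_neg_one, ← hxy]; push_cast; rfl⟩

variable (q : ℕ) [NeZero q]

theorem e_intCast_div (k : ℤ) : e ((k : ℝ) / q) = ZMod.stdAddChar (k : ZMod q) := by
  rw [ZMod.stdAddChar_coe, e]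
  congr 1
  push_cast
  ring

theorem sum_filter_coprime_eq_sum_units {M : Type*} [AddCommMonoid M] (g : ZMod q → M) :
    ∑ a ∈ (Finset.range q).filter (fun a => Nat.Coprime a q), g a = ∑ u : (ZMod q)ˣ, g u := by
  symm
  refine Finset.sum_bij (fun u _ => (u : ZMod q).val) ?_ ?_ ?_ ?_
  · intro u _
    simpa [ZMod.val_lt] using ZMod.val_coe_unit_coprime u
  · intro u _ u' _ h
    exact Units.ext (ZMod.val_injective q h)
  · intro a ha
    simp only [Finset.mem_filter, Finset.mem_range] at ha
    exact ⟨ZMod.unitOfCoprime a ha.2, Finset.mem_univ _, by simp [Nat.mod_eq_of_lt ha.1]⟩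
  · intro u _
    simp

theorem sum_pi_fin_natCast {ι M : Type*} [Fintype ι] [DecidableEq ι] [AddCommMonoid M]
    (g : (ι → ZMod q) → M) :
    ∑ b : ι → Fin q, g (fun i => ((b i : ℕ) : ZMod q)) = ∑ b : ι → ZMod q, g b := by
  have bijective : Function.Bijective fun j : Fin q => ((j : ℕ) : ZMod q) :=
    ⟨fun j k h => Fin.ext (by simpa [Nat.mod_eq_of_lt] using congrArg ZMod.val h),
      fun z => ⟨⟨z.val, z.val_lt⟩, ZMod.natCast_zmod_val z⟩⟩
  exact Fintype.sum_equiv (Equiv.piCongrRight fun _ => Equiv.ofBijective _ bijective) _ _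
    fun _ => rfl

theorem kloosterman_eq_sum_units (m n : ℤ) :
    kloosterman m n q = ∑ u : (ZMod q)ˣ, ZMod.stdAddChar (m * u + n * ↑u⁻¹ : ZMod q) := by
  simp_rw [← ZMod.inv_coe_unit]
  rw [kloosterman, ← sum_filter_coprime_eq_sum_units q
    (fun x => ZMod.stdAddChar (m * x + n * x⁻¹ : ZMod q))]
  refine Finset.sum_congr rfl fun x _ => ?_
  rw [e_intCast_div]
  simp

theorem Sq_eq_sum_units (N : ℤ) (c : Fin 4 → ℤ) :
    Sq q N c = ∑ u : (ZMod q)ˣ, ZMod.stdAddChar (-(u * N) : ZMod q) *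
      ∏ i, quadGaussSum ZMod.stdAddChar (u : ZMod q) (c i) := by
  rw [Sq, ← sum_filter_coprime_eq_sum_units q (fun a => ZMod.stdAddChar (-(a * N) : ZMod q) *
    ∏ i, quadGaussSum ZMod.stdAddChar a (c i : ZMod q))]
  refine Finset.sum_congr rfl fun a _ => ?_
  simp only [quadGaussSum]
  rw [Finset.prod_univ_sum, Fintype.piFinset_univ, Finset.mul_sum, ← sum_pi_fin_natCast]
  refine Finset.sum_congr rfl fun b _ => ?_
  rw [e_intCast_div, ← addChar_map_sum, ← AddChar.map_add_eq_mul]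
  congr 1
  simp only [F, Fin.sum_univ_four]
  push_cast
  ring

end ZMod

theorem four_dvd_F {c : Fin 4 → ℤ} (hc : ∀ i, Odd (c i)) : (4 : ℤ) ∣ F c := by
  choose d hd using hc
  refine ⟨∑ i, (d i ^ 2 + d i) + 1, ?_⟩
  simp only [F, hd, Fin.sum_univ_four]
  ring

section TwoMulOdd

variable {v : ℕ} (hv : Odd v) {c : Fin 4 → ℤ}
include hv

theorem Sq_two_mul_eq_zero (N : ℤ) (hc : ¬∀ i, Odd (c i)) : Sq (2 * v) N c = 0 := by
  have : NeZero (2 * v) := ⟨mul_ne_zero two_ne_zero hv.pos.ne'⟩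
  obtain ⟨i, hi⟩ := not_forall.mp hc
  rw [Sq_eq_sum_units]
  refine Finset.sum_eq_zero fun u _ => mul_eq_zero_of_right _ ?_
  exact Finset.prod_eq_zero (Finset.mem_univ i) <|
    (isDyadicIdempotent_natCast hv).quadGaussSum_eq_zero (ZMod.isPrimitive_stdAddChar _) u
      (natCast_mul_intCast_of_even v (Int.not_odd_iff_even.mp hi))

theorem Sq_two_mul_eq_kloosterman {N n : ℤ} (hN : N ≡ (2 - v) * n [ZMOD (2 * v : ℕ)])
    (hc : ∀ i, Odd (c i)) :
    Sq (2 * v) N c = 4 * ((2 * v : ℕ) : ℂ) ^ 2 * kloosterman n (F c / 2) (2 * v) := by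
  have : NeZero (2 * v) := ⟨mul_ne_zero two_ne_zero hv.pos.ne'⟩
  obtain ⟨α, β, hαβ⟩ := exists_sq_add_sq_eq_neg_one hv
  obtain ⟨m, hm⟩ := four_dvd_F hc
  have sum_sq : ∑ i, (c i : ZMod (2 * v)) ^ 2 = 4 * m := by
    exact_mod_cast congrArg (Int.cast : ℤ → ZMod (2 * v)) hm
  have half_F : F c / 2 = 2 * m := by omega
  have hN' : (N : ZMod (2 * v)) = (2 - v) * n := by
    exact_mod_cast (ZMod.intCast_eq_intCast_iff _ _ _).mpr hN
  rw [Sq_eq_sum_units, kloosterman_eq_sum_units, half_F, hN',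
    (isDyadicIdempotent_natCast hv).sum_units_prod_quadGaussSum (ZMod.isPrimitive_stdAddChar _) hαβ
      (fun i => natCast_mul_intCast_of_odd v (hc i)) sum_sq, ZMod.card,
    Int.cast_mul, Int.cast_ofNat]

end TwoMulOdd

/-- Since `2 - v` is a unit modulo `2v`, every `N` admits such an `n`. -/
theorem stmt_5_general {v : ℕ} (hv : Odd v) {N n : ℤ} (hN : N ≡ (2 - v) * n [ZMOD (2 * v : ℕ)])
    (c : Fin 4 → ℤ) :
    Sq (2 * v) N c =
      4 * (if ∀ i, Odd (c i) then (1 : ℂ) else 0) * ((2 * v : ℕ) : ℂ) ^ 2 *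
        kloosterman n (F c / 2) (2 * v) ∧
    ((∀ i, Odd (c i)) → (4 : ℤ) ∣ F c) := by
  refine ⟨?_, four_dvd_F⟩
  split_ifs with hc
  · rw [Sq_two_mul_eq_kloosterman hv hN hc, mul_one]
  · rw [Sq_two_mul_eq_zero hv N hc, mul_zero, zero_mul, zero_mul]

theorem stmt_5 (v : ℕ) (hv : Odd v) (hv0 : 0 < v) (N' : ℕ) (hN' : 0 < N')
    (c : Fin 4 → ℤ) :
    Sq (2 * v) (4 * (N' : ℤ)) c =
      4 * (if ∀ i, Odd (c i) then (1 : ℂ) else 0) * ((2 * v : ℕ) : ℂ) ^ 2 *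
        kloosterman (2 * (N' : ℤ)) (F c / 2) (2 * v) ∧
    ((∀ i, Odd (c i)) → (4 : ℤ) ∣ F c) :=
  stmt_5_general hv (Int.modEq_iff_dvd.mpr ⟨-N', by push_cast; ring⟩) c
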